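/- Let q be a feasible charge vector and let n ∈ {1,…,m−1} be such that c_n < c_{n+1}, q_{n+1} > 0, and b_n(q) + q_n < B_n. Then there exists a feasible charge vector q′ whose cost ∑_{k=1}^m c_k q′_k is strictly smaller than ∑_{k=1}^m c_k q_k. (Concretely, for sufficiently small ε > 0, increasing q_n by ε and decreasing q_{n+1} by ε yields such a q′.) -/

import Mathlib

/-!
Moving a small amount `ε > 0` of charge from station `n + 1` to station `n` changes only one
arrival level, namely that of node `n + 1`, which rises by `ε` (`batt_shiftCharge`). Hence no lower
threshold is violated, and the departure level changes only at station `n`, where it rises by `ε`.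
With `ε = min (q (n + 1)) (B n - (b_n(q) + q n))`, nonnegativity at `n + 1` and the upper threshold
at `n` survive, and the cost changes by `ε * (c n - c (n + 1)) < 0` (`chargeCost_shiftCharge`).
-/

/-- Arrival battery level at node `i`: `b_i(q) = L + ∑_{k=1}^{i-1} q_k - ∑_{k=0}^{i-1} d_k`. -/
noncomputable def batt (L : ℝ) (d q : ℕ → ℝ) (i : ℕ) : ℝ :=
  L + ∑ k ∈ Finset.Ico 1 i, q k - ∑ k ∈ Finset.range i, d k

/-- Feasibility of a charge vector for a single-path charging instance. -/
def FeasibleCharge (m : ℕ) (L : ℝ) (d β B q : ℕ → ℝ) : Prop :=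
  (∀ n ∈ Finset.Icc 1 m, 0 ≤ q n) ∧
  (∀ i ∈ Finset.Icc 1 (m + 1), β i ≤ batt L d q i) ∧
  (∀ n ∈ Finset.Icc 1 m, batt L d q n + q n ≤ B n)

/-- Cost of a charge vector. -/
noncomputable def chargeCost (m : ℕ) (c q : ℕ → ℝ) : ℝ :=
  ∑ n ∈ Finset.Icc 1 m, c n * q n

/-- The charge vector obtained from `q` by moving the amount `ε` from station `n + 1` to
station `n`. -/
noncomputable def shiftCharge (q : ℕ → ℝ) (n : ℕ) (ε : ℝ) (k : ℕ) : ℝ :=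
  q k + ((if k = n then ε else 0) - (if k = n + 1 then ε else 0))

/-- The two changes cancel in the partial sums `∑_{k < i} q k`, unless `i = n + 1`, where only the
first of them is counted. -/
lemma batt_shiftCharge (L : ℝ) (d q : ℕ → ℝ) {n : ℕ} (hn : 1 ≤ n) (ε : ℝ) (i : ℕ) :
    batt L d (shiftCharge q n ε) i = batt L d q i + if i = n + 1 then ε else 0 := by
  simp only [batt, shiftCharge, Finset.sum_add_distrib, Finset.sum_sub_distrib,
    Finset.sum_ite_eq', Finset.mem_Ico]
  split_ifs <;> first | omega | ring

lemma chargeCost_shiftCharge (c q : ℕ → ℝ) {m n : ℕ} (hn1 : 1 ≤ n) (hn2 : n < m) (ε : ℝ) :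
    chargeCost m c (shiftCharge q n ε) = chargeCost m c q + ε * (c n - c (n + 1)) := by
  have h1 : n ∈ Finset.Icc 1 m := Finset.mem_Icc.2 ⟨hn1, hn2.le⟩
  have h2 : n + 1 ∈ Finset.Icc 1 m := Finset.mem_Icc.2 ⟨by omega, hn2⟩
  simp only [chargeCost, shiftCharge, mul_add, mul_sub, mul_ite, mul_zero,
    Finset.sum_add_distrib, Finset.sum_sub_distrib, Finset.sum_ite_eq', h1, h2, if_true]
  ring

theorem improve_when_current_cheaper
    (m : ℕ) (hm : 1 ≤ m) (L : ℝ) (hL : 0 < L)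
    (d c β B : ℕ → ℝ)
    (hd : ∀ n ≤ m, 0 ≤ d n)
    (hc : ∀ n ∈ Finset.Icc 1 m, 0 < c n)
    (hthr : ∀ n ∈ Finset.Icc 1 m, 0 ≤ β n ∧ β n < B n ∧ B n ≤ L)
    (hβconv : β (m + 1) = 0) (hcconv : c (m + 1) = 0)
    (q : ℕ → ℝ)
    (hfeas : FeasibleCharge m L d β B q)
    (n : ℕ) (hn1 : 1 ≤ n) (hn2 : n < m)
    (hcn : c n < c (n + 1))
    (hqn : 0 < q (n + 1))
    (hb : batt L d q n + q n < B n) :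
    ∃ q', FeasibleCharge m L d β B q' ∧ chargeCost m c q' < chargeCost m c q := by
  obtain ⟨hq, hlow, hup⟩ := hfeas
  obtain ⟨ε, hε, hε1, hε2⟩ : ∃ ε : ℝ, 0 < ε ∧ ε ≤ q (n + 1) ∧ ε ≤ B n - (batt L d q n + q n) :=
    ⟨min (q (n + 1)) (B n - (batt L d q n + q n)), lt_min hqn (sub_pos.2 hb),
      min_le_left _ _, min_le_right _ _⟩
  refine ⟨shiftCharge q n ε, ⟨fun k hk => ?_, fun i hi => ?_, fun k hk => ?_⟩, ?_⟩
  · have := hq k hk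
    unfold shiftCharge
    split_ifs with h1 h2 h2
    · omega
    · linarith
    · subst h2
      linarith
    · linarith
  · have := hlow i hi
    rw [batt_shiftCharge L d q hn1]
    split_ifs <;> linarith
  · have := hup k hk
    rw [batt_shiftCharge L d q hn1]
    unfold shiftCharge
    -- At `k = n + 1` the arrival level gains `ε` and the charge loses `ε`.
    split_ifs with h1 h2 h2
    · omega
    · linarith
    · subst h2
      linarith
    · linarith
  · rw [chargeCost_shiftCharge c q hn1 hn2]
    linarith [mul_pos hε (sub_pos.2 hcn)]
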